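/- Let G ∈ 𝒰_{r,t} with r ≥ 3, t ≥ 1, and let n = r + t be the order of G. Then φ(G) ≥ ⌊n/2⌋ + 2, with equality if and only if G is isomorphic to U_{3,1}, U_{5,1}, or U_{4,4}. -/

import Mathlib

open SimpleGraph

/-- A dissociation set: a set of vertices inducing a subgraph of maximum degree at most 1,
i.e., every vertex of `S` has at most one neighbour inside `S`. -/
def IsDissoc {V : Type*} (G : SimpleGraph V) (S : Set V) : Prop :=
  ∀ v ∈ S, {u | u ∈ S ∧ G.Adj v u}.Subsingleton

/-- A maximal dissociation set: a dissociation set not properly contained in another one. -/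
def IsMaxDissoc {V : Type*} (G : SimpleGraph V) (S : Set V) : Prop :=
  IsDissoc G S ∧ ∀ T : Set V, IsDissoc G T → S ⊆ T → S = T

/-- `phi G` is the number of maximal dissociation sets of `G`. -/
noncomputable def phi {V : Type*} (G : SimpleGraph V) : ℕ :=
  {S : Set V | IsMaxDissoc G S}.ncard

/-- The number of maximal dissociation sets of `G` not containing `u`. -/
noncomputable def phiNot {V : Type*} (G : SimpleGraph V) (u : V) : ℕ :=
  {S : Set V | IsMaxDissoc G S ∧ u ∉ S}.ncard

/-- The number of maximal dissociation sets `S` of `G` with `u ∈ S` and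
`u` of degree 0 in the subgraph induced by `S`. -/
noncomputable def phi0 {V : Type*} (G : SimpleGraph V) (u : V) : ℕ :=
  {S : Set V | IsMaxDissoc G S ∧ u ∈ S ∧ ∀ x ∈ S, ¬ G.Adj u x}.ncard

/-- The number of maximal dissociation sets `S` of `G` with `u ∈ S` and
`u` of degree 1 in the subgraph induced by `S`. -/
noncomputable def phi1 {V : Type*} (G : SimpleGraph V) (u : V) : ℕ :=
  {S : Set V | IsMaxDissoc G S ∧ u ∈ S ∧ ∃! x, x ∈ S ∧ G.Adj u x}.ncard

/-- A unicyclic graph: a connected graph whose number of edges equals its number of vertices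
(equivalently, a connected graph with exactly one cycle). -/
def IsUnicyclic {V : Type*} [Fintype V] (G : SimpleGraph V) : Prop :=
  G.Connected ∧ G.edgeSet.ncard = Fintype.card V

/-- The tree `T(p,q)` (for `q ≤ p`): obtained from the star `K_{1,p}` by subdividing
exactly `q` of its edges.  The centre is `Sum.inl ()`, the `p` neighbours of the centre are
`Sum.inr (Sum.inl i)`, and for `j < q` the vertex `Sum.inr (Sum.inr j)` is the subdivision
pendant attached to the `j`-th neighbour.  It has `1 + p + q` vertices. -/
def treeT (p q : ℕ) (h : q ≤ p) : SimpleGraph (Unit ⊕ Fin p ⊕ Fin q) :=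
  SimpleGraph.fromRel fun a b =>
    (∃ i : Fin p, a = Sum.inl () ∧ b = Sum.inr (Sum.inl i)) ∨
    (∃ j : Fin q, a = Sum.inr (Sum.inl (Fin.castLE h j)) ∧ b = Sum.inr (Sum.inr j))

/-- The unicyclic graph `U(p,q)` (for `q ≤ p`): obtained by identifying one vertex of the
triangle `K₃` with the centre of `T(p,q)`.  The centre is `Sum.inl ()`, the two other triangle
vertices are `Sum.inr (Sum.inl 0)` and `Sum.inr (Sum.inl 1)`, and the copy of `T(p,q)` sits on
the remaining vertices.  It has `3 + p + q` vertices. -/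
def graphU (p q : ℕ) (h : q ≤ p) : SimpleGraph (Unit ⊕ Fin 2 ⊕ Fin p ⊕ Fin q) :=
  SimpleGraph.fromRel fun a b =>
    (a = Sum.inl () ∧ b = Sum.inr (Sum.inl 0)) ∨
    (a = Sum.inl () ∧ b = Sum.inr (Sum.inl 1)) ∨
    (a = Sum.inr (Sum.inl 0) ∧ b = Sum.inr (Sum.inl 1)) ∨
    (∃ i : Fin p, a = Sum.inl () ∧ b = Sum.inr (Sum.inr (Sum.inl i))) ∨
    (∃ j : Fin q, a = Sum.inr (Sum.inr (Sum.inl (Fin.castLE h j))) ∧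
      b = Sum.inr (Sum.inr (Sum.inr j)))

/-- The unicyclic graph obtained from the cycle `C_r` by attaching one pendant vertex
`Sum.inr j` to the cycle vertex `Sum.inl (f j)` for each `j : Fin t`.  For injective `f`
this is a member of the class `𝒰_{r,t}`. -/
def graphUrtF (r t : ℕ) (f : Fin t → Fin r) : SimpleGraph (Fin r ⊕ Fin t) :=
  SimpleGraph.fromRel fun a b =>
    (∃ i j : Fin r, a = Sum.inl i ∧ b = Sum.inl j ∧ (cycleGraph r).Adj i j) ∨
    (∃ j : Fin t, a = Sum.inl (f j) ∧ b = Sum.inr j)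

/-- The canonical member `U_{r,t}` of `𝒰_{r,t}` (for `t ≤ r`): the cycle `C_r` with one
pendant vertex attached to each of its first `t` vertices. -/
def graphUrt (r t : ℕ) (h : t ≤ r) : SimpleGraph (Fin r ⊕ Fin t) :=
  graphUrtF r t (Fin.castLE h)

/-- A caterpillar: a tree in which deleting all vertices of degree 1 leaves a path. -/
def IsCaterpillar {V : Type*} [Fintype V] (G : SimpleGraph V) : Prop :=
  G.IsTree ∧ ∃ m : ℕ,
    Nonempty ((G.induce {v | 2 ≤ (G.neighborSet v).ncard}) ≃g SimpleGraph.pathGraph m)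

/-- The graph `G₁` obtained from `U` by adding `k` new pendant vertices
`v₁ = Sum.inr 0, …, v_k = Sum.inr (k-1)`, each adjacent to `w`. -/
def addPendants {V : Type*} (U : SimpleGraph V) (w : V) (k : ℕ) : SimpleGraph (V ⊕ Fin k) :=
  SimpleGraph.fromRel fun a b =>
    (∃ x y, a = Sum.inl x ∧ b = Sum.inl y ∧ U.Adj x y) ∨
    (∃ j : Fin k, a = Sum.inl w ∧ b = Sum.inr j)

/-- The graph `G₂ = G₁ - w v_k + v₁ v_k`: obtained from `U` by attaching the pendant vertices
`v₁, …, v_{k-1}` to `w` and the vertex `v_k` to `v₁`. -/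
def swapPendant {V : Type*} (U : SimpleGraph V) (w : V) (k : ℕ) : SimpleGraph (V ⊕ Fin k) :=
  SimpleGraph.fromRel fun a b =>
    (∃ x y, a = Sum.inl x ∧ b = Sum.inl y ∧ U.Adj x y) ∨
    (∃ j : Fin k, j.val < k - 1 ∧ a = Sum.inl w ∧ b = Sum.inr j) ∨
    (∃ j₀ j₁ : Fin k, j₀.val = 0 ∧ j₁.val = k - 1 ∧ a = Sum.inr j₀ ∧ b = Sum.inr j₁)

/-- The graph obtained from `H` by attaching a pendant path of length 2 at `w`:
two new vertices `v = Sum.inr 0` and `u = Sum.inr 1` with edges `w v` and `v u`. -/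
def addPath2 {V : Type*} (H : SimpleGraph V) (w : V) : SimpleGraph (V ⊕ Fin 2) :=
  SimpleGraph.fromRel fun a b =>
    (∃ x y, a = Sum.inl x ∧ b = Sum.inl y ∧ H.Adj x y) ∨
    (a = Sum.inl w ∧ b = Sum.inr 0) ∨
    (a = Sum.inr 0 ∧ b = Sum.inr 1)

/-! The number of maximal dissociation sets does not decrease when passing from an induced subgraph
to the whole graph: every dissociation set grows to a maximal one, and two sets whose union is not a
dissociation set never grow to the same one. Deleting a vertex of a path leaves a disjoint sum of
two paths, on which `φ` is at least multiplicative; hence `φ (P_n) ≥ n + 4` for `n ≥ 8`. Since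
`C_r` contains `P_{r-1}`, this gives `φ (C_r) ≥ r + 3` for `r ≥ 7`, which beats `⌊(r + t) / 2⌋ + 2`
whatever the pendants are. For `r ≤ 6`, every graph of the class contains, after a rotation of the
cycle and the deletion of pendants, one of finitely many small graphs; counting their maximal
dissociation sets leaves only the three extremal graphs. -/

open Finset

section Maximal

variable {V : Type*} {G : SimpleGraph V}

theorem IsDissoc.mono {S T : Set V} (hT : IsDissoc G T) (hST : S ⊆ T) : IsDissoc G S :=
  fun v hv _ hu _ hw => hT v (hST hv) ⟨hST hu.1, hu.2⟩ ⟨hST hw.1, hw.2⟩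

theorem isMaxDissoc_iff_maximal {S : Set V} : IsMaxDissoc G S ↔ Maximal (IsDissoc G) S := by
  rw [maximal_iff]
  rfl

theorem IsDissoc.exists_subset_isMaxDissoc [Finite V] {S : Set V} (hS : IsDissoc G S) :
    ∃ M, S ⊆ M ∧ IsMaxDissoc G M := by
  simp only [isMaxDissoc_iff_maximal]
  exact (Set.toFinite {T : Set V | IsDissoc G T}).exists_le_maximal hS

theorem IsMaxDissoc.eq_of_isDissoc_union {S T : Set V} (hS : IsMaxDissoc G S)
    (hT : IsMaxDissoc G T) (h : IsDissoc G (S ∪ T)) : S = T :=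
  (hS.2 _ h Set.subset_union_left).trans (hT.2 _ h Set.subset_union_right).symm

-- Grow each member to a maximal dissociation set: a common one would contain their union.
theorem card_le_phi_of_injective_union {ι : Type*} [Finite V] (D : ι → Set V)
    (hD : ∀ i, IsDissoc G (D i)) (hinj : ∀ i j, IsDissoc G (D i ∪ D j) → i = j) :
    Nat.card ι ≤ phi G := by
  choose M hDM hM using fun i => (hD i).exists_subset_isMaxDissoc
  have hM_inj : Function.Injective fun i => (⟨M i, hM i⟩ : {S : Set V | IsMaxDissoc G S}) := by
    intro i j hij
    have hMij : M j ⊆ M i := (congrArg Subtype.val hij).ge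
    exact hinj i j ((hM i).1.mono (Set.union_subset (hDM i) ((hDM j).trans hMij)))
  exact Nat.card_le_card_of_injective _ hM_inj

end Maximal

section Embedding

variable {V W : Type*} {G : SimpleGraph V} {H : SimpleGraph W}

theorem IsDissoc.image (e : H ↪g G) {S : Set W} (hS : IsDissoc H S) : IsDissoc G (e '' S) := by
  rintro _ ⟨v, hv, rfl⟩ _ ⟨⟨u, hu, rfl⟩, hvu⟩ _ ⟨⟨w, hw, rfl⟩, hvw⟩
  rw [hS v hv ⟨hu, e.map_adj_iff.1 hvu⟩ ⟨hw, e.map_adj_iff.1 hvw⟩]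

theorem IsDissoc.preimage (e : H ↪g G) {S : Set V} (hS : IsDissoc G S) : IsDissoc H (e ⁻¹' S) :=
  fun v hv _ hu _ hw =>
    e.injective (hS (e v) hv ⟨hu.1, e.map_adj_iff.2 hu.2⟩ ⟨hw.1, e.map_adj_iff.2 hw.2⟩)

theorem phi_le_of_embedding [Finite V] (e : H ↪g G) : phi H ≤ phi G := by
  refine card_le_phi_of_injective_union (fun S : {S : Set W | IsMaxDissoc H S} => e '' S)
    (fun S => S.2.1.image e) fun S T h => Subtype.ext (S.2.eq_of_isDissoc_union T.2 ?_)
  simpa only [← Set.image_union, Set.preimage_image_eq _ e.injective] using h.preimage e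

theorem phi_congr [Finite V] (e : H ≃g G) : phi H = phi G :=
  have : Finite W := .of_equiv V e.symm.toEquiv
  (phi_le_of_embedding e.toEmbedding).antisymm (phi_le_of_embedding e.symm.toEmbedding)

/-- The embedding of a disjoint sum of graphs given by embeddings of the two summands into a
common graph, provided that their images are disjoint and no edge joins them. -/
def embeddingOfSum {U : Type*} {K : SimpleGraph U} (e₁ : G ↪g K) (e₂ : H ↪g K)
    (hne : ∀ v w, e₁ v ≠ e₂ w) (hadj : ∀ v w, ¬ K.Adj (e₁ v) (e₂ w)) : G ⊕g H ↪g K where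
  toFun := Sum.elim e₁ e₂
  inj' := e₁.injective.sumElim e₂.injective hne
  map_rel_iff' {a b} := by
    have hadj' : ∀ v w, ¬ K.Adj (e₂ w) (e₁ v) := fun v w h => hadj v w h.symm
    change K.Adj (Sum.elim e₁ e₂ a) (Sum.elim e₁ e₂ b) ↔ _
    rcases a with v | v <;> rcases b with w | w <;> simp [hadj, hadj']

theorem IsDissoc.sum {S : Set V} {T : Set W} (hS : IsDissoc G S) (hT : IsDissoc H T) :
    IsDissoc (G ⊕g H) (Sum.inl '' S ∪ Sum.inr '' T) := by
  rintro (v | v) hv (u | u) hu (w | w) hw <;>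
    simp only [SimpleGraph.sum_adj, Set.mem_ofPred_eq, Set.mem_union, Set.mem_image,
      Sum.inl.injEq, Sum.inr.injEq, reduceCtorEq, exists_eq_right, and_false, exists_false,
      or_false, false_or] at hv hu hw
  · exact congrArg Sum.inl (hS v hv hu hw)
  · exact congrArg Sum.inr (hT v hv hu hw)

theorem phi_mul_phi_le_phi_sum [Finite V] [Finite W] (G : SimpleGraph V) (H : SimpleGraph W) :
    phi G * phi H ≤ phi (G ⊕g H) := by
  rw [phi, phi, ← Set.ncard_prod]
  refine card_le_phi_of_injective_union
    (fun P : {S : Set V | IsMaxDissoc G S} ×ˢ {T : Set W | IsMaxDissoc H T} =>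
      Sum.inl '' P.1.1 ∪ Sum.inr '' P.1.2)
    (fun P => P.2.1.1.sum P.2.2.1) fun P Q h => Subtype.ext (Prod.ext ?_ ?_)
  · have hl : IsDissoc G (Sum.inl ⁻¹' _) := h.preimage Embedding.sumInl
    refine P.2.1.eq_of_isDissoc_union Q.2.1 ?_
    simpa [Set.preimage_image_eq _ Sum.inl_injective] using hl
  · have hr : IsDissoc H (Sum.inr ⁻¹' _) := h.preimage Embedding.sumInr
    refine P.2.2.eq_of_isDissoc_union Q.2.2 ?_
    simpa [Set.preimage_image_eq _ Sum.inr_injective] using hr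

end Embedding

section Decidable

variable {V : Type*} {G : SimpleGraph V}

theorem isDissoc_coe_iff {S : Finset V} : IsDissoc G (S : Set V) ↔
    ∀ v ∈ S, ∀ u ∈ S, G.Adj v u → ∀ w ∈ S, G.Adj v w → u = w :=
  ⟨fun h v hv _ hu hvu _ hw hvw => h v hv ⟨hu, hvu⟩ ⟨hw, hvw⟩,
    fun h v hv u hu w hw => h v hv u hu.1 hu.2 w hw.1 hw.2⟩

theorem isMaxDissoc_coe_iff [DecidableEq V] {S : Finset V} : IsMaxDissoc G (S : Set V) ↔
    IsDissoc G (S : Set V) ∧ ∀ v, v ∉ S → ¬ IsDissoc G (insert v S : Finset V) := by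
  rw [isMaxDissoc_iff_maximal, Set.maximal_iff_forall_insert fun _ _ => IsDissoc.mono]
  simp only [mem_coe, coe_insert]

instance decidableIsDissoc [DecidableEq V] [DecidableRel G.Adj] (S : Finset V) :
    Decidable (IsDissoc G (S : Set V)) :=
  decidable_of_iff' _ isDissoc_coe_iff

instance decidableIsMaxDissoc [Fintype V] [DecidableEq V] [DecidableRel G.Adj] (S : Finset V) :
    Decidable (IsMaxDissoc G (S : Set V)) :=
  decidable_of_iff' _ isMaxDissoc_coe_iff

theorem phi_eq_card_filter [Fintype V] [DecidableEq V] (G : SimpleGraph V) [DecidableRel G.Adj] :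
    phi G = #{S : Finset V | IsMaxDissoc G (S : Set V)} := by
  rw [phi, ← Set.ncard_coe_finset, ← Set.ncard_image_of_injective _ coe_injective]
  congr 1
  ext S
  simpa using ⟨fun hS => ⟨S.toFinite.toFinset, by simpa using hS, by simp⟩,
    by rintro ⟨T, hT, rfl⟩; exact hT⟩

instance decidablePathGraphAdj (n : ℕ) : DecidableRel (pathGraph n).Adj :=
  fun _ _ => decidable_of_iff' _ pathGraph_adj

end Decidable

section PathAndCycle

theorem phi_pathGraph_le_of_le {m n : ℕ} (h : m ≤ n) : phi (pathGraph m) ≤ phi (pathGraph n) :=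
  phi_le_of_embedding ⟨Fin.castLEEmb h, by simp [pathGraph_adj]⟩

/-- The paths on the first `m` and the last `n` vertices of a path on `m + 1 + n` vertices, which
together form the induced subgraph obtained by deleting the vertex `m`. -/
def pathGraphSumEmbedding (m n : ℕ) : pathGraph m ⊕g pathGraph n ↪g pathGraph (m + 1 + n) :=
  embeddingOfSum ⟨Fin.castLEEmb (by omega), by simp [pathGraph_adj]⟩
    ⟨Fin.natAddEmb (m + 1), by simp [pathGraph_adj, add_assoc]⟩
    (fun i j => Fin.ne_of_lt (show (i : ℕ) < m + 1 + j by omega))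
    (fun i j => pathGraph_adj.not.2
      (show ¬((i : ℕ) + 1 = m + 1 + j ∨ m + 1 + j + 1 = (i : ℕ)) by omega))

theorem phi_pathGraph_mul_le (m n : ℕ) :
    phi (pathGraph m) * phi (pathGraph n) ≤ phi (pathGraph (m + 1 + n)) :=
  (phi_mul_phi_le_phi_sum _ _).trans (phi_le_of_embedding (pathGraphSumEmbedding m n))

theorem add_four_le_phi_pathGraph {n : ℕ} (hn : 8 ≤ n) : n + 4 ≤ phi (pathGraph n) := by
  induction n using Nat.strong_induction_on with
  | _ n ih =>
  obtain rfl | h | h : n = 8 ∨ (9 ≤ n ∧ n < 12) ∨ 12 ≤ n := by omega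
  · rw [phi_eq_card_filter]
    decide +kernel
  · have h9 : 16 ≤ phi (pathGraph 9) := by
      rw [phi_eq_card_filter]
      decide +kernel
    have := h9.trans (phi_pathGraph_le_of_le h.1)
    omega
  · obtain ⟨m, rfl⟩ : ∃ m, n = m + 1 + 3 := ⟨n - 4, by omega⟩
    have h3 : 3 ≤ phi (pathGraph 3) := by
      rw [phi_eq_card_filter]
      decide +kernel
    have := ih m (by omega) (by omega)
    have := (Nat.mul_le_mul this h3).trans (phi_pathGraph_mul_le m 3)
    omega

theorem cycleGraph_castLE_adj_iff {m r : ℕ} (h : m < r) (u v : Fin m) :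
    (cycleGraph r).Adj (u.castLE h.le) (v.castLE h.le) ↔ (pathGraph m).Adj u v := by
  wlog huv : u ≤ v generalizing u v
  · rw [SimpleGraph.adj_comm, SimpleGraph.adj_comm (pathGraph m), this v u (le_of_not_ge huv)]
  have hvu : (v.castLE h.le - u.castLE h.le).val = v - u := Fin.sub_val_of_le huv
  rcases huv.eq_or_lt with rfl | hlt
  · simp
  have huv' : (u.castLE h.le - v.castLE h.le).val = r + u - v := Fin.coe_sub_iff_lt.2 hlt
  rw [cycleGraph_adj', pathGraph_adj, hvu, huv']
  omega

theorem phi_pathGraph_le_phi_cycleGraph {m r : ℕ} (h : m < r) :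
    phi (pathGraph m) ≤ phi (cycleGraph r) :=
  phi_le_of_embedding ⟨Fin.castLEEmb h.le, cycleGraph_castLE_adj_iff h _ _⟩

theorem add_three_le_phi_cycleGraph {r : ℕ} (hr : 7 ≤ r) : r + 3 ≤ phi (cycleGraph r) := by
  obtain rfl | rfl | h : r = 7 ∨ r = 8 ∨ 9 ≤ r := by omega
  · rw [phi_eq_card_filter]
    decide +kernel
  · rw [phi_eq_card_filter]
    decide +kernel
  · have := add_four_le_phi_pathGraph (n := r - 1) (by omega)
    have := phi_pathGraph_le_phi_cycleGraph (m := r - 1) (r := r) (by omega)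
    omega

end PathAndCycle

section CycleWithPendants

variable {r t : ℕ}

@[simp] theorem graphUrtF_adj_inl_inl (f : Fin t → Fin r) (i j : Fin r) :
    (graphUrtF r t f).Adj (Sum.inl i) (Sum.inl j) ↔ (cycleGraph r).Adj i j := by
  simpa [graphUrtF, (cycleGraph r).adj_comm j i] using SimpleGraph.Adj.ne

@[simp] theorem graphUrtF_adj_inl_inr (f : Fin t → Fin r) (i : Fin r) (j : Fin t) :
    (graphUrtF r t f).Adj (Sum.inl i) (Sum.inr j) ↔ f j = i := by
  simp [graphUrtF, eq_comm]

@[simp] theorem graphUrtF_adj_inr_inl (f : Fin t → Fin r) (i : Fin r) (j : Fin t) :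
    (graphUrtF r t f).Adj (Sum.inr j) (Sum.inl i) ↔ f j = i := by
  rw [SimpleGraph.adj_comm, graphUrtF_adj_inl_inr]

@[simp] theorem not_graphUrtF_adj_inr_inr (f : Fin t → Fin r) (i j : Fin t) :
    ¬ (graphUrtF r t f).Adj (Sum.inr i) (Sum.inr j) := by
  simp [graphUrtF]

instance decidableGraphUrtFAdj (f : Fin t → Fin r) : DecidableRel (graphUrtF r t f).Adj
  | .inl i, .inl j => decidable_of_iff' _ (graphUrtF_adj_inl_inl f i j)
  | .inl i, .inr j => decidable_of_iff' _ (graphUrtF_adj_inl_inr f i j)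
  | .inr j, .inl i => decidable_of_iff' _ (graphUrtF_adj_inr_inl f i j)
  | .inr i, .inr j => isFalse (not_graphUrtF_adj_inr_inr f i j)

theorem phi_cycleGraph_le_phi_graphUrtF (f : Fin t → Fin r) :
    phi (cycleGraph r) ≤ phi (graphUrtF r t f) :=
  phi_le_of_embedding ⟨.inl, graphUrtF_adj_inl_inl f _ _⟩

theorem nonempty_embedding_graphUrtF [NeZero r] {s : ℕ} {g : Fin s → Fin r} {f : Fin t → Fin r}
    (hg : Function.Injective g) (h : ∃ c, ∀ j, g j + c ∈ univ.image f) :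
    Nonempty (graphUrtF r s g ↪g graphUrtF r t f) := by
  obtain ⟨c, hc⟩ := h
  have hpendant : ∀ j, ∃ k, f k = g j + c := by simpa using hc
  choose k hk using hpendant
  have hk_inj : Function.Injective k := fun a b hab =>
    hg (add_right_cancel ((hk a).symm.trans (hab ▸ hk b)))
  refine ⟨⟨⟨Sum.map (· + c) k, (add_left_injective c).sumMap hk_inj⟩, ?_⟩⟩
  rintro (a | a) (b | b) <;> simp [hk, cycleGraph_adj', add_sub_add_right_eq_sub]

theorem phi_graphUrtF_le_of_add_mem_image [NeZero r] {s : ℕ} {g : Fin s → Fin r}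
    {f : Fin t → Fin r} (hg : Function.Injective g) (h : ∃ c, ∀ j, g j + c ∈ univ.image f) :
    phi (graphUrtF r s g) ≤ phi (graphUrtF r t f) :=
  let ⟨e⟩ := nonempty_embedding_graphUrtF hg h
  phi_le_of_embedding e

theorem nonempty_iso_graphUrtF [NeZero r] {g f : Fin t → Fin r}
    (hg : Function.Injective g) (h : ∃ c, ∀ j, g j + c ∈ univ.image f) :
    Nonempty (graphUrtF r t f ≃g graphUrtF r t g) :=
  let ⟨e⟩ := nonempty_embedding_graphUrtF hg h
  ⟨(RelIso.ofSurjective e (Finite.surjective_of_injective e.injective)).symm⟩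

end CycleWithPendants

section SmallCycles

variable {t : ℕ}

theorem six_le_phi_graphUrtF_three (ht : 2 ≤ t) {f : Fin t → Fin 3} (hf : Function.Injective f) :
    6 ≤ phi (graphUrtF 3 t f) := by
  have hrot : ∀ A : Finset (Fin 3), 2 ≤ #A → ∃ c, ∀ j, ![0, 1] j + c ∈ A := by decide
  have hA : 2 ≤ #(univ.image f) := by simpa [card_image_of_injective _ hf]
  refine le_trans ?_ (phi_graphUrtF_le_of_add_mem_image (by decide) (hrot _ hA))
  rw [phi_eq_card_filter]
  decide +kernel

theorem six_le_phi_cycleGraph_four : 6 ≤ phi (cycleGraph 4) := by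
  rw [phi_eq_card_filter]
  decide +kernel

theorem six_le_phi_graphUrtF_five (ht : 2 ≤ t) {f : Fin t → Fin 5} (hf : Function.Injective f) :
    6 ≤ phi (graphUrtF 5 t f) := by
  have hrot : ∀ A : Finset (Fin 5), 2 ≤ #A →
      (∃ c, ∀ j, ![0, 1] j + c ∈ A) ∨ ∃ c, ∀ j, ![0, 2] j + c ∈ A := by decide +kernel
  have hA : 2 ≤ #(univ.image f) := by simpa [card_image_of_injective _ hf]
  rcases hrot _ hA with h | h <;>
  · refine le_trans ?_ (phi_graphUrtF_le_of_add_mem_image (by decide) h)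
    rw [phi_eq_card_filter]
    decide +kernel

theorem eight_le_phi_graphUrtF_five (ht : 3 ≤ t) {f : Fin t → Fin 5}
    (hf : Function.Injective f) : 8 ≤ phi (graphUrtF 5 t f) := by
  have hrot : ∀ A : Finset (Fin 5), 3 ≤ #A →
      (∃ c, ∀ j, ![0, 1, 2] j + c ∈ A) ∨ ∃ c, ∀ j, ![0, 1, 3] j + c ∈ A := by decide +kernel
  have hA : 3 ≤ #(univ.image f) := by simpa [card_image_of_injective _ hf]
  rcases hrot _ hA with h | h <;>
  · refine le_trans ?_ (phi_graphUrtF_le_of_add_mem_image (by decide) h)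
    rw [phi_eq_card_filter]
    decide +kernel

theorem phi_graphUrt_three_one : phi (graphUrt 3 1 (by omega)) = 4 := by
  rw [graphUrt, phi_eq_card_filter]
  decide +kernel

theorem phi_graphUrt_five_one : phi (graphUrt 5 1 (by omega)) = 5 := by
  rw [graphUrt, phi_eq_card_filter]
  decide +kernel

theorem phi_graphUrt_four_four : phi (graphUrt 4 4 (by omega)) = 6 := by
  rw [graphUrt, phi_eq_card_filter]
  decide +kernel

theorem nine_le_phi_graphUrtF_six (ht : 1 ≤ t) (f : Fin t → Fin 6) :
    9 ≤ phi (graphUrtF 6 t f) := by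
  have hrot : ∃ c, ∀ j, ![0] j + c ∈ univ.image f := ⟨f ⟨0, ht⟩, by simp⟩
  refine le_trans ?_ (phi_graphUrtF_le_of_add_mem_image (by decide) hrot)
  rw [phi_eq_card_filter]
  decide +kernel

end SmallCycles

section Extremal

/-- The extremal graphs of the theorem: the isomorphic copies of `U_{3,1}`, `U_{5,1}` and
`U_{4,4}`. -/
def IsExtremalUrt {V : Type*} (G : SimpleGraph V) : Prop :=
  Nonempty (G ≃g graphUrt 3 1 (by omega)) ∨
    Nonempty (G ≃g graphUrt 5 1 (by omega)) ∨
    Nonempty (G ≃g graphUrt 4 4 (by omega))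

theorem IsExtremalUrt.phi_eq {V : Type*} [Fintype V] {G : SimpleGraph V} (h : IsExtremalUrt G) :
    phi G = Fintype.card V / 2 + 2 := by
  rcases h with ⟨⟨e⟩⟩ | ⟨⟨e⟩⟩ | ⟨⟨e⟩⟩
  · rw [phi_congr e, phi_graphUrt_three_one, Fintype.card_congr e.toEquiv]
    rfl
  · rw [phi_congr e, phi_graphUrt_five_one, Fintype.card_congr e.toEquiv]
    rfl
  · rw [phi_congr e, phi_graphUrt_four_four, Fintype.card_congr e.toEquiv]
    rfl

theorem IsExtremalUrt.of_iso {V W : Type*} {G : SimpleGraph V} {H : SimpleGraph W} (e : G ≃g H)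
    (h : IsExtremalUrt H) : IsExtremalUrt G :=
  h.imp (.map e.trans) (.imp (.map e.trans) (.map e.trans))

variable {r t : ℕ}

theorem nonempty_iso_graphUrt_one (f : Fin 1 → Fin r) (h : 1 ≤ r) :
    Nonempty (graphUrtF r 1 f ≃g graphUrt r 1 h) := by
  have : NeZero r := ⟨Nat.ne_zero_of_lt h⟩
  refine nonempty_iso_graphUrtF (Fin.castLE_injective h) ⟨f 0, fun j => ?_⟩
  simp [Subsingleton.elim j 0, Fin.ext_iff]

theorem nonempty_iso_graphUrt_self [NeZero r] {f : Fin r → Fin r} (hf : Function.Injective f) :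
    Nonempty (graphUrtF r r f ≃g graphUrt r r le_rfl) := by
  refine nonempty_iso_graphUrtF (Fin.castLE_injective le_rfl) ⟨0, fun j => ?_⟩
  simpa using Finite.surjective_of_injective hf _

theorem isExtremalUrt_or_le_phi_graphUrtF (hr : 3 ≤ r) (ht : 1 ≤ t) {f : Fin t → Fin r}
    (hf : Function.Injective f) :
    IsExtremalUrt (graphUrtF r t f) ∨ (r + t) / 2 + 3 ≤ phi (graphUrtF r t f) := by
  have htr : t ≤ r := by simpa using Fintype.card_le_of_injective f hf
  obtain rfl | rfl | rfl | rfl | hr7 : r = 3 ∨ r = 4 ∨ r = 5 ∨ r = 6 ∨ 7 ≤ r := by omega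
  · obtain rfl | ht2 := ht.eq_or_lt
    · exact .inl (.inl (nonempty_iso_graphUrt_one f _))
    · have := six_le_phi_graphUrtF_three ht2 hf
      omega
  · obtain rfl | ht4 := htr.eq_or_lt
    · exact .inl (.inr (.inr (nonempty_iso_graphUrt_self hf)))
    · have := six_le_phi_cycleGraph_four.trans (phi_cycleGraph_le_phi_graphUrtF f)
      omega
  · obtain rfl | rfl | ht3 : t = 1 ∨ t = 2 ∨ 3 ≤ t := by omega
    · exact .inl (.inr (.inl (nonempty_iso_graphUrt_one f _)))
    · exact .inr (six_le_phi_graphUrtF_five le_rfl hf)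
    · have := eight_le_phi_graphUrtF_five ht3 hf
      omega
  · have := nine_le_phi_graphUrtF_six ht f
    omega
  · have := (add_three_le_phi_cycleGraph hr7).trans (phi_cycleGraph_le_phi_graphUrtF f)
    omega

end Extremal

/-- if `G ∈ 𝒰_{r,t}` with `r ≥ 3` and `t ≥ 1` (so `G` has order `n = r + t`),
then `φ(G) ≥ ⌊n/2⌋ + 2`, with equality iff `G` is isomorphic to `U_{3,1}`, `U_{5,1}` or
`U_{4,4}`. -/
theorem stmt15 {V : Type*} [Fintype V] (G : SimpleGraph V) (r t : ℕ) (hr : 3 ≤ r) (ht : 1 ≤ t)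
    (f : Fin t → Fin r) (hf : Function.Injective f) (hiso : Nonempty (G ≃g graphUrtF r t f))
    (hcard : Fintype.card V = r + t) :
    (r + t) / 2 + 2 ≤ phi G ∧
      (phi G = (r + t) / 2 + 2 ↔
        Nonempty (G ≃g graphUrt 3 1 (by omega)) ∨
        Nonempty (G ≃g graphUrt 5 1 (by omega)) ∨
        Nonempty (G ≃g graphUrt 4 4 (by omega))) := by
  obtain ⟨e⟩ := hiso
  change _ ∧ (_ ↔ IsExtremalUrt G)
  have hext : IsExtremalUrt G → phi G = (r + t) / 2 + 2 := fun h => hcard ▸ h.phi_eq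
  have hdich : IsExtremalUrt G ∨ (r + t) / 2 + 3 ≤ phi G :=
    phi_congr e ▸ (isExtremalUrt_or_le_phi_graphUrtF hr ht hf).imp_left (.of_iso e)
  rcases hdich with h | h
  · exact ⟨(hext h).ge, fun _ => h, hext⟩
  · exact ⟨by omega, fun heq => absurd heq (by omega), hext⟩
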